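/- Assume ΣT = 0. Let g ∈ L²([t0,T],ℝᵐ), let (μ̂, ν̂) solve the two-point boundary value problem μ̂' = Fμ̂ - GQG*ν̂, -ν̂' = F*ν̂ + H*R^{-1}Hμ̂ - H*R^{-1}g, μ̂(t0) = -Π0 ν̂(t0), ν̂(T) = 0, and let r solve the forward ODE r'(t) = (F(t) - Π(t)H*(t)R(t)^{-1}H(t)) r(t) + Π(t)H*(t)R(t)^{-1}g(t) with r(t0) = 0. Then for every s ∈ [t0,T]: ν̂(s) = -∫_s^T Φ_{F,Π}*(t,s) H*(t)R(t)^{-1} (g(t) - H(t)r(t)) dt, and μ̂(s) = r(s) + Π(s) ∫_s^T Φ_{F,Π}*(t,s) H*(t)R(t)^{-1} (g(t) - H(t)r(t)) dt. -/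

import Mathlib

/-!
All differential equations are read in integral form: `MatPrim a b X X'` says that, entry by entry,
`X` is the primitive of the integrable function `X'` on `[a,b]`. For such functions there is a
product rule (`MatPrim.mul`, from integration by parts for absolutely continuous functions), and
`X' = A X + X B`, `X(a) = 0`, with integrable `A`, `B`, has only the zero solution
(`MatPrim.eq_zero`, from the Grönwall estimate `gronwall_zero`). The latter needs `M := H*R⁻¹H` to
be integrable (`matII_hrh`): since `R ⪰ r I`, the entries of `R⁻¹` are bounded by `1/r`, and `H` is
square integrable.

Uniqueness is used twice. First, subtracting from the Riccati equation its transpose, `D = Π - Π*`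
satisfies `D' = (F - (MΠ)*) D + D (F* - MΠ)` with `D(t0) = 0`, so `Π` is symmetric. Secondly, in
the derivative of `e = μ̂ + Πν̂ - r` the terms `GQG*ν̂` cancel, as do those in `g`, which leaves
`e' = (F - ΠM) e`, `e(t0) = 0`; hence `μ̂ = r - Πν̂`. Substituting this into the equation of `ν̂`
gives `-ν̂' = (F - ΠM)* ν̂ - H*R⁻¹(g - Hr)`, so that
`d/dt (Φ(t,s)* ν̂(t)) = Φ(t,s)* H*R⁻¹(g - Hr)`. Integrating over `[s,T]`, with `Φ(s,s) = I` and
`ν̂(T) = 0`, yields the formula for `ν̂(s)`, and then that for `μ̂(s) = r(s) - Π(s)ν̂(s)`.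
-/

open MeasureTheory Matrix Set Filter

noncomputable section

namespace SDEKernels

/-- Entrywise interval integral of a matrix-valued function. -/
def matInt {ι κ : Type*} (X : ℝ → Matrix ι κ ℝ) (a b : ℝ) : Matrix ι κ ℝ :=
  Matrix.of fun i j => ∫ τ in a..b, X τ i j

/-- Entrywise continuity of a matrix-valued function on a set. -/
def MatContOn {ι κ : Type*} (X : ℝ → Matrix ι κ ℝ) (s : Set ℝ) : Prop :=
  ∀ i j, ContinuousOn (fun t => X t i j) s

/-- Entrywise interval integrability (matrix-valued `L¹` on `[a,b]`). -/
def MatII {ι κ : Type*} (X : ℝ → Matrix ι κ ℝ) (a b : ℝ) : Prop :=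
  ∀ i j, IntervalIntegrable (fun t => X t i j) volume a b

/-- Entrywise square integrability (matrix-valued `L²` on `[a,b]`). -/
def MatL2 {ι κ : Type*} (X : ℝ → Matrix ι κ ℝ) (a b : ℝ) : Prop :=
  ∀ i j, IntervalIntegrable (fun t => X t i j) volume a b ∧
    IntervalIntegrable (fun t => (X t i j) ^ 2) volume a b

/-- Componentwise square integrability (vector-valued `L²` on `[a,b]`). -/
def VecL2 {ι : Type*} (x : ℝ → ι → ℝ) (a b : ℝ) : Prop :=
  ∀ i, IntervalIntegrable (fun t => x t i) volume a b ∧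
    IntervalIntegrable (fun t => (x t i) ^ 2) volume a b

/-- `G(τ) Q(τ) G(τ)*`. -/
def gqg {n d : ℕ} (G : ℝ → Matrix (Fin n) (Fin d) ℝ) (Q : ℝ → Matrix (Fin d) (Fin d) ℝ)
    (τ : ℝ) : Matrix (Fin n) (Fin n) ℝ := G τ * Q τ * (G τ)ᵀ

/-- `H(τ)* R(τ)⁻¹ H(τ)`. -/
def hrh {n m : ℕ} (H : ℝ → Matrix (Fin m) (Fin n) ℝ) (R : ℝ → Matrix (Fin m) (Fin m) ℝ)
    (τ : ℝ) : Matrix (Fin n) (Fin n) ℝ := (H τ)ᵀ * (R τ)⁻¹ * H τ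

/-- `Φ` is the state-transition matrix of `x' = A(s) x` on `[a,b]`, in the
Carathéodory (integral) sense: `Φ(t,t) = I` and `∂ₛ Φ(s,t) = A(s) Φ(s,t)`. -/
def IsTransition {ι : Type*} [Fintype ι] [DecidableEq ι] (a b : ℝ)
    (A : ℝ → Matrix ι ι ℝ) (Φ : ℝ → ℝ → Matrix ι ι ℝ) : Prop :=
  ∀ t ∈ Icc a b,
    MatContOn (fun s => Φ s t) (Icc a b) ∧
    MatII (fun τ => A τ * Φ τ t) a b ∧
    ∀ s ∈ Icc a b, Φ s t = 1 + matInt (fun τ => A τ * Φ τ t) t s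

/-- Carathéodory solution of the backward matrix Riccati equation
`-Σ' = ΣF + F*Σ - Σ G Q G* Σ + H* R⁻¹ H`, `Σ(b) = ST`, on `[a,b]`. -/
def SolvesBackRiccati {n m d : ℕ} (a b : ℝ) (F : ℝ → Matrix (Fin n) (Fin n) ℝ)
    (G : ℝ → Matrix (Fin n) (Fin d) ℝ) (Q : ℝ → Matrix (Fin d) (Fin d) ℝ)
    (H : ℝ → Matrix (Fin m) (Fin n) ℝ) (R : ℝ → Matrix (Fin m) (Fin m) ℝ)
    (ST : Matrix (Fin n) (Fin n) ℝ) (S : ℝ → Matrix (Fin n) (Fin n) ℝ) : Prop :=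
  MatContOn S (Icc a b) ∧
  MatII (fun τ => S τ * F τ + (F τ)ᵀ * S τ - S τ * gqg G Q τ * S τ + hrh H R τ) a b ∧
  S b = ST ∧
  ∀ t ∈ Icc a b,
    S t = ST + matInt (fun τ => S τ * F τ + (F τ)ᵀ * S τ - S τ * gqg G Q τ * S τ + hrh H R τ) t b

/-- Carathéodory solution of the forward matrix Riccati equation
`Π' = FΠ + ΠF* - Π H* R⁻¹ H Π + G Q G*`, `Π(a) = P0`, on `[a,b]`. -/
def SolvesFwdRiccati {n m d : ℕ} (a b : ℝ) (F : ℝ → Matrix (Fin n) (Fin n) ℝ)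
    (G : ℝ → Matrix (Fin n) (Fin d) ℝ) (Q : ℝ → Matrix (Fin d) (Fin d) ℝ)
    (H : ℝ → Matrix (Fin m) (Fin n) ℝ) (R : ℝ → Matrix (Fin m) (Fin m) ℝ)
    (P0 : Matrix (Fin n) (Fin n) ℝ) (P : ℝ → Matrix (Fin n) (Fin n) ℝ) : Prop :=
  MatContOn P (Icc a b) ∧
  MatII (fun τ => F τ * P τ + P τ * (F τ)ᵀ - P τ * hrh H R τ * P τ + gqg G Q τ) a b ∧
  P a = P0 ∧
  ∀ t ∈ Icc a b,
    P t = P0 + matInt (fun τ => F τ * P τ + P τ * (F τ)ᵀ - P τ * hrh H R τ * P τ + gqg G Q τ) a t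

/-- Carathéodory solution of the perturbed two-point boundary value problem
`μ' = Fμ - GQG*ν + lμ`, `-ν' = F*ν + H*R⁻¹Hμ - lν`, `μ(a) = -P0 ν(a)`, `ν(b) = ST μ(b)`. -/
def SolvesTPBVP {n m d : ℕ} (a b : ℝ) (F : ℝ → Matrix (Fin n) (Fin n) ℝ)
    (G : ℝ → Matrix (Fin n) (Fin d) ℝ) (Q : ℝ → Matrix (Fin d) (Fin d) ℝ)
    (H : ℝ → Matrix (Fin m) (Fin n) ℝ) (R : ℝ → Matrix (Fin m) (Fin m) ℝ)
    (P0 ST : Matrix (Fin n) (Fin n) ℝ) (lμ lν : ℝ → Fin n → ℝ)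
    (μ ν : ℝ → Fin n → ℝ) : Prop :=
  ContinuousOn μ (Icc a b) ∧ ContinuousOn ν (Icc a b) ∧
  IntervalIntegrable (fun τ => (F τ).mulVec (μ τ) - (gqg G Q τ).mulVec (ν τ) + lμ τ) volume a b ∧
  IntervalIntegrable (fun τ => (F τ)ᵀ.mulVec (ν τ) + (hrh H R τ).mulVec (μ τ) - lν τ) volume a b ∧
  (∀ t ∈ Icc a b,
    μ t = μ a + ∫ τ in a..t, ((F τ).mulVec (μ τ) - (gqg G Q τ).mulVec (ν τ) + lμ τ)) ∧
  (∀ t ∈ Icc a b,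
    ν t = ν b + ∫ τ in t..b, ((F τ)ᵀ.mulVec (ν τ) + (hrh H R τ).mulVec (μ τ) - lν τ)) ∧
  μ a = -(P0.mulVec (ν a)) ∧
  ν b = ST.mulVec (μ b)

/-- The trajectory kernel `K(s,t|T)`. -/
def Kker {n d : ℕ} (t0 : ℝ) (G : ℝ → Matrix (Fin n) (Fin d) ℝ)
    (Q : ℝ → Matrix (Fin d) (Fin d) ℝ) (PhiFS : ℝ → ℝ → Matrix (Fin n) (Fin n) ℝ)
    (S : ℝ → Matrix (Fin n) (Fin n) ℝ) (P0h : Matrix (Fin n) (Fin n) ℝ)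
    (s t : ℝ) : Matrix (Fin n) (Fin n) ℝ :=
  PhiFS s t0 * P0h * (1 + P0h * S t0 * P0h)⁻¹ * P0h * (PhiFS t t0)ᵀ +
    matInt (fun τ => PhiFS s τ * gqg G Q τ * (PhiFS t τ)ᵀ) t0 (min s t)

/-- The information kernel `Λ(s,t|T)`. -/
def Lker {n m : ℕ} (T : ℝ) (H : ℝ → Matrix (Fin m) (Fin n) ℝ)
    (R : ℝ → Matrix (Fin m) (Fin m) ℝ) (PhiFP : ℝ → ℝ → Matrix (Fin n) (Fin n) ℝ)
    (P : ℝ → Matrix (Fin n) (Fin n) ℝ) (STh : Matrix (Fin n) (Fin n) ℝ)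
    (s t : ℝ) : Matrix (Fin n) (Fin n) ℝ :=
  (PhiFP T s)ᵀ * STh * (1 + STh * P T * STh)⁻¹ * STh * PhiFP T t +
    matInt (fun τ => (PhiFP τ s)ᵀ * hrh H R τ * PhiFP τ t) (max s t) T


/-- Carathéodory solution of the forward linear ODE `x' = A(τ) x` (vector-valued). -/
def SolvesLinFwd {n : ℕ} (a b : ℝ) (A : ℝ → Matrix (Fin n) (Fin n) ℝ)
    (x : ℝ → Fin n → ℝ) : Prop :=
  ContinuousOn x (Icc a b) ∧
  IntervalIntegrable (fun τ => (A τ).mulVec (x τ)) volume a b ∧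
  ∀ t ∈ Icc a b, x t = x a + ∫ τ in a..t, (A τ).mulVec (x τ)

/-- Carathéodory solution of the backward linear ODE `-χ' = F(σ)* χ` on `[a,c]`
with terminal value `χ(c) = z`. -/
def SolvesChi {n : ℕ} (a c : ℝ) (F : ℝ → Matrix (Fin n) (Fin n) ℝ) (z : Fin n → ℝ)
    (χ : ℝ → Fin n → ℝ) : Prop :=
  ContinuousOn χ (Icc a c) ∧
  IntervalIntegrable (fun σ => (F σ)ᵀ.mulVec (χ σ)) volume a c ∧
  χ c = z ∧
  ∀ τ ∈ Icc a c, χ τ = z + ∫ σ in τ..c, (F σ)ᵀ.mulVec (χ σ)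

/-- Carathéodory solution of the impulse-response two-point boundary value problem at `t`:
`x' = Fx - GQG*q + GQG*χ·1_{τ<t}`, `-q' = F*q + H*R⁻¹Hx`,
`x(a) = -P0 q(a) + P0 χ(a)`, `q(b) = ST x(b)`. -/
def SolvesImpulseSystem {n m d : ℕ} (a b t : ℝ) (F : ℝ → Matrix (Fin n) (Fin n) ℝ)
    (G : ℝ → Matrix (Fin n) (Fin d) ℝ) (Q : ℝ → Matrix (Fin d) (Fin d) ℝ)
    (H : ℝ → Matrix (Fin m) (Fin n) ℝ) (R : ℝ → Matrix (Fin m) (Fin m) ℝ)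
    (P0 ST : Matrix (Fin n) (Fin n) ℝ) (χ x q : ℝ → Fin n → ℝ) : Prop :=
  ContinuousOn x (Icc a b) ∧ ContinuousOn q (Icc a b) ∧
  IntervalIntegrable (fun τ => (F τ).mulVec (x τ) - (gqg G Q τ).mulVec (q τ) +
    (if τ < t then (gqg G Q τ).mulVec (χ τ) else 0)) volume a b ∧
  IntervalIntegrable (fun τ => (F τ)ᵀ.mulVec (q τ) + (hrh H R τ).mulVec (x τ)) volume a b ∧
  (∀ s ∈ Icc a b, x s = x a + ∫ τ in a..s, ((F τ).mulVec (x τ) - (gqg G Q τ).mulVec (q τ) +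
    (if τ < t then (gqg G Q τ).mulVec (χ τ) else 0))) ∧
  (∀ s ∈ Icc a b, q s = q b + ∫ τ in s..b, ((F τ)ᵀ.mulVec (q τ) + (hrh H R τ).mulVec (x τ))) ∧
  x a = -(P0.mulVec (q a)) + P0.mulVec (χ a) ∧
  q b = ST.mulVec (x b)

/-- Right-hand side of the adjoint equation `-λ' = F*λ + H*R⁻¹H γ`. -/
def hamRHS {n m : ℕ} (F : ℝ → Matrix (Fin n) (Fin n) ℝ)
    (H : ℝ → Matrix (Fin m) (Fin n) ℝ) (R : ℝ → Matrix (Fin m) (Fin m) ℝ)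
    (gam lam : ℝ → Fin n → ℝ) (τ : ℝ) : Fin n → ℝ :=
  (F τ)ᵀ.mulVec (lam τ) + (hrh H R τ).mulVec (gam τ)

/-- Carathéodory solution `(γ, λ)` of the Hamiltonian system with a jump of size `lamb` at `s`
(and terminal condition appropriate to `ΣT = 0`):
`γ' = Fγ - GQG*λ`, `-λ' = F*λ + H*R⁻¹Hγ` on `[t0,s)` and `(s,T]`, `γ(t0) = -Π0 λ(t0)`,
`λ(T) = 0` if `s < T` (`λ(T) = lamb` if `s = T`), and `λ(s) - λ(s⁺) = lamb` if `s < T`. -/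
def SolvesHamJump {n m d : ℕ} (t0 T s : ℝ) (F : ℝ → Matrix (Fin n) (Fin n) ℝ)
    (G : ℝ → Matrix (Fin n) (Fin d) ℝ) (Q : ℝ → Matrix (Fin d) (Fin d) ℝ)
    (H : ℝ → Matrix (Fin m) (Fin n) ℝ) (R : ℝ → Matrix (Fin m) (Fin m) ℝ)
    (P0 : Matrix (Fin n) (Fin n) ℝ) (lamb : Fin n → ℝ) (gam lam : ℝ → Fin n → ℝ) : Prop :=
  ContinuousOn gam (Icc t0 T) ∧
  IntervalIntegrable (fun τ => (F τ).mulVec (gam τ) - (gqg G Q τ).mulVec (lam τ)) volume t0 T ∧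
  IntervalIntegrable (hamRHS F H R gam lam) volume t0 T ∧
  gam t0 = -(P0.mulVec (lam t0)) ∧
  (∀ t ∈ Icc t0 T,
    gam t = gam t0 + ∫ τ in t0..t, ((F τ).mulVec (gam τ) - (gqg G Q τ).mulVec (lam τ))) ∧
  ContinuousOn lam (Icc t0 s) ∧
  (∀ t ∈ Icc t0 s, lam t = lam s + ∫ τ in t..s, hamRHS F H R gam lam τ) ∧
  (s < T →
    ContinuousOn lam (Ioc s T) ∧ lam T = 0 ∧
    (∀ t ∈ Ioc s T, lam t = ∫ τ in t..T, hamRHS F H R gam lam τ) ∧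
    Tendsto lam (nhdsWithin s (Ioi s)) (nhds (lam s - lamb))) ∧
  (s = T → lam T = lamb)

/-- Carathéodory solution of the filter equation
`r' = (F - Π H* R⁻¹ H) r + Π H* R⁻¹ g`, `r(t0) = 0`. -/
def SolvesRODE {n m : ℕ} (a b : ℝ) (F : ℝ → Matrix (Fin n) (Fin n) ℝ)
    (H : ℝ → Matrix (Fin m) (Fin n) ℝ) (R : ℝ → Matrix (Fin m) (Fin m) ℝ)
    (P : ℝ → Matrix (Fin n) (Fin n) ℝ) (g : ℝ → Fin m → ℝ) (rr : ℝ → Fin n → ℝ) : Prop :=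
  ContinuousOn rr (Icc a b) ∧
  IntervalIntegrable (fun τ => (F τ - P τ * hrh H R τ).mulVec (rr τ) +
    (P τ * (H τ)ᵀ * (R τ)⁻¹).mulVec (g τ)) volume a b ∧
  rr a = 0 ∧
  ∀ t ∈ Icc a b, rr t = ∫ τ in a..t, ((F τ - P τ * hrh H R τ).mulVec (rr τ) +
    (P τ * (H τ)ᵀ * (R τ)⁻¹).mulVec (g τ))

/-- Carathéodory solution of the controlled ODE `x' = F x + G Q^{1/2} u`, `x(t0) = Π0^{1/2} ξ`. -/
def SolvesControlODE {n d : ℕ} (a b : ℝ) (F : ℝ → Matrix (Fin n) (Fin n) ℝ)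
    (G : ℝ → Matrix (Fin n) (Fin d) ℝ) (Qh : ℝ → Matrix (Fin d) (Fin d) ℝ)
    (P0h : Matrix (Fin n) (Fin n) ℝ) (ξ : Fin n → ℝ) (u : ℝ → Fin d → ℝ)
    (x : ℝ → Fin n → ℝ) : Prop :=
  ContinuousOn x (Icc a b) ∧
  IntervalIntegrable (fun σ => (F σ).mulVec (x σ) + (G σ * Qh σ).mulVec (u σ)) volume a b ∧
  x a = P0h.mulVec ξ ∧
  ∀ τ ∈ Icc a b, x τ = x a + ∫ σ in a..τ, ((F σ).mulVec (x σ) + (G σ * Qh σ).mulVec (u σ))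

/-- The least-squares objective of the deterministic smoothing problem. -/
def Jfun {n m d : ℕ} (a b : ℝ) (H : ℝ → Matrix (Fin m) (Fin n) ℝ)
    (R : ℝ → Matrix (Fin m) (Fin m) ℝ) (ST : Matrix (Fin n) (Fin n) ℝ)
    (ytil : ℝ → Fin m → ℝ) (ξ : Fin n → ℝ) (u : ℝ → Fin d → ℝ) (x : ℝ → Fin n → ℝ) : ℝ :=
  dotProduct ξ ξ + dotProduct (ST.mulVec (x b)) (x b)
    + (∫ τ in a..b, dotProduct (u τ) (u τ))
    + (∫ τ in a..b, dotProduct ((hrh H R τ).mulVec (x τ)) (x τ))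
    - 2 * ∫ τ in a..b, dotProduct (ytil τ) (((R τ)⁻¹ * H τ).mulVec (x τ))
/-- The Hamiltonian matrix `[[F, -GQG*], [-H*R⁻¹H, -F*]]`. -/
def hamMat {n m d : ℕ} (F : ℝ → Matrix (Fin n) (Fin n) ℝ)
    (G : ℝ → Matrix (Fin n) (Fin d) ℝ) (Q : ℝ → Matrix (Fin d) (Fin d) ℝ)
    (H : ℝ → Matrix (Fin m) (Fin n) ℝ) (R : ℝ → Matrix (Fin m) (Fin m) ℝ) (t : ℝ) :
    Matrix (Fin n ⊕ Fin n) (Fin n ⊕ Fin n) ℝ :=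
  Matrix.fromBlocks (F t) (-(gqg G Q t)) (-(hrh H R t)) (-(F t)ᵀ)

/-- `Φ̄(T,t) = [[I,0],[-ΣT,I]] · Φ_𝐇(T,t)`. -/
def phiBar {n : ℕ} (ST : Matrix (Fin n) (Fin n) ℝ)
    (PhiH : ℝ → ℝ → Matrix (Fin n ⊕ Fin n) (Fin n ⊕ Fin n) ℝ) (T t : ℝ) :
    Matrix (Fin n ⊕ Fin n) (Fin n ⊕ Fin n) ℝ :=
  Matrix.fromBlocks 1 0 (-ST) 1 * PhiH T t

open Topology

/-! ### Absolutely continuous functions and Grönwall's inequality -/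

/-- `f` is absolutely continuous on `[a,b]` with integrable derivative `f'`, in integral form. -/
def IsPrim (a b : ℝ) (f f' : ℝ → ℝ) : Prop :=
  IntervalIntegrable f' volume a b ∧ ∀ t ∈ Icc a b, f t = f a + ∫ τ in a..t, f' τ

/-- Entrywise version of `IsPrim`. -/
def MatPrim {ι κ : Type*} (a b : ℝ) (X X' : ℝ → Matrix ι κ ℝ) : Prop :=
  ∀ i j, IsPrim a b (fun t => X t i j) (fun t => X' t i j)

section Scalar

variable {a b : ℝ} {f f' g g' : ℝ → ℝ}

theorem II_sub {E : Type*} [NormedAddCommGroup E] {f : ℝ → E}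
    (h : IntervalIntegrable f volume a b) {s t : ℝ} (hs : s ∈ Icc a b)
    (ht : t ∈ Icc a b) : IntervalIntegrable f volume s t := by
  have hab : a ≤ b := hs.1.trans hs.2
  refine h.mono_set ?_
  rw [uIcc_of_le hab]
  exact uIcc_subset_Icc hs ht

/-- The integral equation may be written with any base point `s` in `[a,b]`, for instance a terminal
time. -/
theorem IsPrim.of_base (h : IntervalIntegrable f' volume a b) {c : ℝ} {s : ℝ} (hs : s ∈ Icc a b)
    (hf : ∀ t ∈ Icc a b, f t = c + ∫ τ in s..t, f' τ) : IsPrim a b f f' := by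
  have ha : a ∈ Icc a b := ⟨le_rfl, hs.1.trans hs.2⟩
  refine ⟨h, fun t ht => ?_⟩
  rw [hf t ht, hf a ha, add_assoc,
    intervalIntegral.integral_add_adjacent_intervals (II_sub h hs ha) (II_sub h ha ht)]

theorem IsPrim.integral_eq (h : IsPrim a b f f') {s t : ℝ} (hs : s ∈ Icc a b)
    (ht : t ∈ Icc a b) : ∫ τ in s..t, f' τ = f t - f s := by
  have ha : a ∈ Icc a b := ⟨le_rfl, hs.1.trans hs.2⟩
  rw [h.2 t ht, h.2 s hs, ← intervalIntegral.integral_add_adjacent_intervals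
    (II_sub h.1 ha hs) (II_sub h.1 hs ht)]
  ring

theorem IsPrim.continuousOn (h : IsPrim a b f f') : ContinuousOn f (Icc a b) := by
  rcases le_or_gt a b with hab | hab
  · have h1 : ContinuousOn (fun t => f a + ∫ τ in a..t, f' τ) (Icc a b) := by
      have := intervalIntegral.continuousOn_primitive_interval' h.1 left_mem_uIcc
      rw [uIcc_of_le hab] at this
      exact continuousOn_const.add this
    exact h1.congr h.2
  · simp [Icc_eq_empty (not_le.2 hab)]

theorem IsPrim.add (hf : IsPrim a b f f') (hg : IsPrim a b g g') :
    IsPrim a b (fun t => f t + g t) (fun t => f' t + g' t) := by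
  refine ⟨hf.1.add hg.1, fun t ht => ?_⟩
  have ha : a ∈ Icc a b := ⟨le_rfl, ht.1.trans ht.2⟩
  rw [intervalIntegral.integral_add (II_sub hf.1 ha ht) (II_sub hg.1 ha ht)]
  beta_reduce
  rw [hf.2 t ht, hg.2 t ht]
  ring

theorem IsPrim.sub (hf : IsPrim a b f f') (hg : IsPrim a b g g') :
    IsPrim a b (fun t => f t - g t) (fun t => f' t - g' t) := by
  refine ⟨hf.1.sub hg.1, fun t ht => ?_⟩
  have ha : a ∈ Icc a b := ⟨le_rfl, ht.1.trans ht.2⟩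
  rw [intervalIntegral.integral_sub (II_sub hf.1 ha ht) (II_sub hg.1 ha ht)]
  beta_reduce
  rw [hf.2 t ht, hg.2 t ht]
  ring

theorem IsPrim.sum {ι : Type*} (s : Finset ι) {f f' : ι → ℝ → ℝ}
    (h : ∀ i ∈ s, IsPrim a b (f i) (f' i)) :
    IsPrim a b (fun t => ∑ i ∈ s, f i t) (fun t => ∑ i ∈ s, f' i t) := by
  classical
  induction s using Finset.induction_on with
  | empty => exact ⟨by simp, by simp⟩
  | insert i s hi ih =>
    simp only [Finset.sum_insert hi]
    exact (h i (by simp)).add (ih fun j hj => h j (by simp [hj]))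

/-- The product rule for absolutely continuous functions. -/
theorem IsPrim.mul (hab : a ≤ b) (hf : IsPrim a b f f') (hg : IsPrim a b g g') :
    IsPrim a b (fun t => f t * g t) (fun t => f' t * g t + f t * g' t) := by
  have hfc := hf.continuousOn
  have hgc := hg.continuousOn
  rw [← uIcc_of_le hab] at hfc hgc
  refine ⟨(hf.1.mul_continuousOn hgc).add (hg.1.continuousOn_mul hfc), fun t ht => ?_⟩
  -- Mathlib's integration by parts is applied to the primitives, which are defined on all of `ℝ`.
  have key : ∀ {u u' : ℝ → ℝ}, IsPrim a b u u' →
      AbsolutelyContinuousOnInterval (fun x => u a + ∫ τ in a..x, u' τ) a t ∧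
      ∀ᵐ x, x ∈ uIcc a t → deriv (fun x => u a + ∫ τ in a..x, u' τ) x = u' x := by
    intro u u' hu
    have hu' := II_sub hu.1 (left_mem_Icc.2 hab) ht
    constructor
    · have hc : AbsolutelyContinuousOnInterval (fun _ : ℝ => u a) a t :=
        (LipschitzWith.const (u a)).lipschitzOnWith.absolutelyContinuousOnInterval
      exact hc.add (hu'.absolutelyContinuousOnInterval_intervalIntegral left_mem_uIcc)
    · filter_upwards [hu'.ae_hasDerivAt_integral] with x hx hxt
      exact ((hx hxt a left_mem_uIcc).const_add (u a)).deriv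
  obtain ⟨hfa, hfd⟩ := key hf
  obtain ⟨hga, hgd⟩ := key hg
  have h1 := hfa.integral_deriv_mul_eq_sub hga
  have h2 : ∫ x in a..t, (f' x * g x + f x * g' x) = f t * g t - f a * g a := by
    simp only [intervalIntegral.integral_same, add_zero, ← hf.2 t ht, ← hg.2 t ht] at h1
    rw [← h1]
    apply intervalIntegral.integral_congr_ae
    filter_upwards [hfd, hgd] with x hx1 hx2 hx
    have hx' := uIoc_subset_uIcc hx
    have hxI : x ∈ Icc a b := by
      rw [uIcc_of_le ht.1] at hx'
      exact ⟨hx'.1, hx'.2.trans ht.2⟩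
    rw [hx1 hx', hx2 hx', ← hf.2 x hxI, ← hg.2 x hxI]
  rw [h2]; ring

/-- Grönwall's inequality with an integrable (possibly unbounded) rate and zero initial value. -/
theorem gronwall_zero {φ k : ℝ → ℝ} (hφ : ContinuousOn φ (Icc a b))
    (hk : IntervalIntegrable k volume a b) (hk0 : ∀ t, 0 ≤ k t) (hφ0 : ∀ t, 0 ≤ φ t)
    (h : ∀ t ∈ Icc a b, φ t ≤ ∫ τ in a..t, k τ * φ τ) : ∀ t ∈ Icc a b, φ t = 0 := by
  intro t₁ ht₁
  have hab : a ≤ b := ht₁.1.trans ht₁.2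
  have ha : a ∈ Icc a b := ⟨le_rfl, hab⟩
  have hkφ : IntervalIntegrable (fun τ => k τ * φ τ) volume a b :=
    hk.mul_continuousOn (by rwa [uIcc_of_le hab])
  have hsub : Icc a b ⊆ {t | φ t = 0} := by
    refine IsClosed.Icc_subset_of_forall_mem_nhdsGT_of_Icc_subset ?_ ?_ ?_
    · rw [inter_comm]
      exact hφ.preimage_isClosed_of_isClosed isClosed_Icc isClosed_singleton
    · have := h a ha
      simp only [intervalIntegral.integral_same] at this
      exact le_antisymm this (hφ0 a)
    · intro t ht hz
      have htI : t ∈ Icc a b := ⟨ht.1, ht.2.le⟩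
      -- beyond a zero `t` of `φ`, choose an interval on which `k` has mass less than `1`
      have hcont : ContinuousOn (fun u => ∫ τ in t..u, k τ) (Icc a b) := by
        have := intervalIntegral.continuousOn_primitive_interval' hk (a := t)
          (by rwa [uIcc_of_le hab])
        rwa [uIcc_of_le hab] at this
      have hev : ∀ᶠ u in 𝓝[>] t, ∫ τ in t..u, k τ < 1 := by
        have h1 : Tendsto (fun u => ∫ τ in t..u, k τ) (𝓝[Icc a b] t) (𝓝 0) := by
          simpa using (hcont t htI).tendsto
        have h2 : 𝓝[>] t ≤ 𝓝[Icc a b] t := by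
          rw [← nhdsWithin_Ioc_eq_nhdsGT ht.2]
          exact nhdsWithin_mono _ fun x hx => ⟨ht.1.trans hx.1.le, hx.2⟩
        exact (h1.mono_left h2).eventually (gt_mem_nhds one_pos)
      have hev2 : ∀ᶠ u in 𝓝[>] t, u ∈ Ioc t b := Ioc_mem_nhdsGT ht.2
      obtain ⟨c, hc1, hc2⟩ := (hev.and hev2).exists
      have hcI : c ∈ Icc a b := ⟨ht.1.trans hc2.1.le, hc2.2⟩
      have hIc : Icc t c ⊆ Icc a b := Icc_subset_Icc ht.1 hc2.2
      obtain ⟨u, hu, hmax⟩ := isCompact_Icc.exists_isMaxOn (nonempty_Icc.2 hc2.1.le)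
        (hφ.mono hIc)
      have huI := hIc hu
      have h0 : ∫ τ in a..t, k τ * φ τ = 0 := by
        rw [intervalIntegral.integral_congr (g := fun _ => (0 : ℝ)), intervalIntegral.integral_zero]
        intro x hx
        rw [uIcc_of_le ht.1] at hx
        simp [show φ x = 0 from hz hx]
      have h1 : φ u ≤ ∫ τ in t..u, k τ * φ τ := by
        have := h u huI
        rwa [← intervalIntegral.integral_add_adjacent_intervals (II_sub hkφ ha htI)
          (II_sub hkφ htI huI), h0, zero_add] at this
      have h2 : ∫ τ in t..u, k τ * φ τ ≤ ∫ τ in t..u, k τ * φ u := by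
        refine intervalIntegral.integral_mono_on hu.1 (II_sub hkφ htI huI)
          ((II_sub hk htI huI).mul_const _) fun x hx => ?_
        exact mul_le_mul_of_nonneg_left (hmax ⟨hx.1, hx.2.trans hu.2⟩) (hk0 x)
      rw [intervalIntegral.integral_mul_const] at h2
      have h3 : ∫ τ in t..u, k τ ≤ ∫ τ in t..c, k τ := by
        rw [← intervalIntegral.integral_add_adjacent_intervals (II_sub hk htI huI)
          (II_sub hk huI hcI)]
        have := intervalIntegral.integral_nonneg (μ := volume) hu.2 (fun x _ => hk0 x)
        linarith
      have h4 : φ u = 0 := by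
        by_contra hne
        have hpos := lt_of_le_of_ne (hφ0 u) (Ne.symm hne)
        nlinarith
      have : Ioc t c ∈ 𝓝[>] t := Ioc_mem_nhdsGT hc2.1
      filter_upwards [this] with x hx
      have := hmax ⟨hx.1.le, hx.2⟩
      simp only [mem_ofPred_eq, h4] at this
      exact le_antisymm this (hφ0 x)
  exact hsub ht₁

end Scalar

/-! ### Absolutely continuous matrix functions and linear equations -/

section MatrixCalculus

variable {a b : ℝ} {ι κ o : Type*}

theorem MatPrim.continuousOn {X X' : ℝ → Matrix ι κ ℝ} (h : MatPrim a b X X') :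
    MatContOn X (Icc a b) := fun i j => (h i j).continuousOn

theorem MatPrim.add {X X' Y Y' : ℝ → Matrix ι κ ℝ} (hX : MatPrim a b X X')
    (hY : MatPrim a b Y Y') : MatPrim a b (fun t => X t + Y t) (fun t => X' t + Y' t) :=
  fun i j => (hX i j).add (hY i j)

theorem MatPrim.sub {X X' Y Y' : ℝ → Matrix ι κ ℝ} (hX : MatPrim a b X X')
    (hY : MatPrim a b Y Y') : MatPrim a b (fun t => X t - Y t) (fun t => X' t - Y' t) :=
  fun i j => (hX i j).sub (hY i j)

theorem MatPrim.transpose {X X' : ℝ → Matrix ι κ ℝ} (h : MatPrim a b X X') :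
    MatPrim a b (fun t => (X t)ᵀ) (fun t => (X' t)ᵀ) := fun i j => h j i

theorem MatPrim.mul [Fintype κ] (hab : a ≤ b) {X X' : ℝ → Matrix ι κ ℝ} {Y Y' : ℝ → Matrix κ o ℝ}
    (hX : MatPrim a b X X') (hY : MatPrim a b Y Y') :
    MatPrim a b (fun t => X t * Y t) (fun t => X' t * Y t + X t * Y' t) := by
  intro i j
  have := IsPrim.sum Finset.univ (fun k _ => (hX i k).mul hab (hY k j))
  simpa only [Matrix.mul_apply, Matrix.add_apply, ← Finset.sum_add_distrib] using this

/-- A derivative may be rewritten by identities that hold only on `[a,b]`. -/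
theorem MatPrim.congr (hab : a ≤ b) {X X' Y' : ℝ → Matrix ι κ ℝ} (h : MatPrim a b X X')
    (hXY : ∀ t ∈ Icc a b, X' t = Y' t) : MatPrim a b X Y' := by
  intro i j
  have hI : ∀ t ∈ Icc a b, EqOn (fun τ => X' τ i j) (fun τ => Y' τ i j) (uIcc a t) := by
    intro t ht x hx
    rw [uIcc_of_le ht.1] at hx
    simp only [hXY x ⟨hx.1, hx.2.trans ht.2⟩]
  have hX := (h i j).1
  refine ⟨?_, fun t ht => ?_⟩
  · refine hX.congr fun x hx => ?_
    rw [uIoc_of_le hab] at hx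
    simp only [hXY x (Ioc_subset_Icc_self hx)]
  · rw [(h i j).2 t ht, intervalIntegral.integral_congr (hI t ht)]

theorem matII_mul_cont [Fintype κ] (hab : a ≤ b) {X : ℝ → Matrix ι κ ℝ} {Y : ℝ → Matrix κ o ℝ}
    (hX : MatII X a b) (hY : MatContOn Y (Icc a b)) : MatII (fun t => X t * Y t) a b := by
  intro i j
  simp only [Matrix.mul_apply]
  have := IntervalIntegrable.sum (μ := volume) (a := a) (b := b) Finset.univ
    (f := fun k t => X t i k * Y t k j)
    (fun k _ => (hX i k).mul_continuousOn (by rw [uIcc_of_le hab]; exact hY k j))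
  simpa only [Finset.sum_fn] using this

theorem MatII.transpose {X : ℝ → Matrix ι κ ℝ} (h : MatII X a b) :
    MatII (fun t => (X t)ᵀ) a b := fun i j => h j i

theorem MatII.sub {X Y : ℝ → Matrix ι κ ℝ} (hX : MatII X a b) (hY : MatII Y a b) :
    MatII (fun t => X t - Y t) a b := fun i j => (hX i j).sub (hY i j)

/-- Uniqueness for the linear matrix equation `X' = A X + X B`, `X(a) = 0`, with integrable
coefficients. -/
theorem MatPrim.eq_zero [Fintype ι] [Fintype κ] (hab : a ≤ b) {A : ℝ → Matrix ι ι ℝ}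
    {B : ℝ → Matrix κ κ ℝ} {X : ℝ → Matrix ι κ ℝ}
    (hA : MatII A a b) (hB : MatII B a b)
    (hX : MatPrim a b X (fun t => A t * X t + X t * B t)) (h0 : X a = 0) :
    ∀ t ∈ Icc a b, X t = 0 := by
  set φ : ℝ → ℝ := fun t => ∑ i, ∑ j, |X t i j| with hφ
  set α : ℝ → ℝ := fun t => ∑ i, ∑ l, |A t i l| with hα
  set β : ℝ → ℝ := fun t => ∑ l, ∑ j, |B t l j| with hβ
  have hent : ∀ t i j, |X t i j| ≤ φ t := fun t i j =>
    (Finset.single_le_sum (f := fun j => |X t i j|) (fun _ _ => abs_nonneg _)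
      (Finset.mem_univ j)).trans
    (Finset.single_le_sum (f := fun i => ∑ j, |X t i j|)
      (fun _ _ => Finset.sum_nonneg fun _ _ => abs_nonneg _) (Finset.mem_univ i))
  have hφ0 : ∀ t, 0 ≤ φ t := fun t =>
    Finset.sum_nonneg fun _ _ => Finset.sum_nonneg fun _ _ => abs_nonneg _
  have hα0 : ∀ t, 0 ≤ α t := fun t =>
    Finset.sum_nonneg fun _ _ => Finset.sum_nonneg fun _ _ => abs_nonneg _
  have hβ0 : ∀ t, 0 ≤ β t := fun t =>
    Finset.sum_nonneg fun _ _ => Finset.sum_nonneg fun _ _ => abs_nonneg _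
  have hφc : ContinuousOn φ (Icc a b) :=
    continuousOn_finsetSum _ fun i _ => continuousOn_finsetSum _ fun j _ =>
      (hX.continuousOn i j).abs
  have hαI : IntervalIntegrable α volume a b := by
    have := IntervalIntegrable.sum (μ := volume) (a := a) (b := b) Finset.univ
      (f := fun i t => ∑ l, |A t i l|) (fun i _ => by
        have := IntervalIntegrable.sum (μ := volume) (a := a) (b := b) Finset.univ
          (f := fun l t => |A t i l|) (fun l _ => (hA i l).abs)
        simpa only [Finset.sum_fn] using this)
    simpa only [Finset.sum_fn] using this
  have hβI : IntervalIntegrable β volume a b := by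
    have := IntervalIntegrable.sum (μ := volume) (a := a) (b := b) Finset.univ
      (f := fun i t => ∑ l, |B t i l|) (fun i _ => by
        have := IntervalIntegrable.sum (μ := volume) (a := a) (b := b) Finset.univ
          (f := fun l t => |B t i l|) (fun l _ => (hB i l).abs)
        simpa only [Finset.sum_fn] using this)
    simpa only [Finset.sum_fn] using this
  have hbound : ∀ t i j, |(A t * X t + X t * B t) i j| ≤ (α t + β t) * φ t := by
    intro t i j
    rw [Matrix.add_apply, add_mul]
    refine (abs_add_le _ _).trans (add_le_add ?_ ?_)
    · rw [Matrix.mul_apply]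
      refine (Finset.abs_sum_le_sum_abs _ _).trans ?_
      calc ∑ l, |A t i l * X t l j| ≤ ∑ l, |A t i l| * φ t := Finset.sum_le_sum fun l _ => by
            rw [abs_mul]; exact mul_le_mul_of_nonneg_left (hent t l j) (abs_nonneg _)
        _ = (∑ l, |A t i l|) * φ t := by rw [Finset.sum_mul]
        _ ≤ α t * φ t := mul_le_mul_of_nonneg_right
            (Finset.single_le_sum (f := fun i => ∑ l, |A t i l|)
              (fun _ _ => Finset.sum_nonneg fun _ _ => abs_nonneg _) (Finset.mem_univ i)) (hφ0 t)
    · rw [Matrix.mul_apply]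
      refine (Finset.abs_sum_le_sum_abs _ _).trans ?_
      calc ∑ l, |X t i l * B t l j| ≤ ∑ l, |B t l j| * φ t := Finset.sum_le_sum fun l _ => by
            rw [abs_mul, mul_comm]; exact mul_le_mul_of_nonneg_left (hent t i l) (abs_nonneg _)
        _ = (∑ l, |B t l j|) * φ t := by rw [Finset.sum_mul]
        _ ≤ β t * φ t := mul_le_mul_of_nonneg_right
            (Finset.sum_le_sum fun l _ => Finset.single_le_sum (f := fun j => |B t l j|)
              (fun _ _ => abs_nonneg _) (Finset.mem_univ j)) (hφ0 t)
  have hkφ : IntervalIntegrable (fun τ => (α τ + β τ) * φ τ) volume a b :=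
    (hαI.add hβI).mul_continuousOn (by rwa [uIcc_of_le hab])
  have hN0 : (0 : ℝ) ≤ Fintype.card ι * Fintype.card κ := by positivity
  have hzero := gronwall_zero (φ := φ)
    (k := fun t => (Fintype.card ι * Fintype.card κ : ℝ) * (α t + β t)) hφc
    ((hαI.add hβI).const_mul _) (fun t => mul_nonneg hN0 (add_nonneg (hα0 t) (hβ0 t))) hφ0 (by
      intro t ht
      have ha : a ∈ Icc a b := ⟨le_rfl, hab⟩
      have h1 : ∀ i j, |X t i j| ≤ ∫ τ in a..t, (α τ + β τ) * φ τ := by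
        intro i j
        have hXt := (hX i j).2 t ht
        beta_reduce at hXt
        rw [hXt, h0, Matrix.zero_apply, zero_add]
        refine (intervalIntegral.abs_integral_le_integral_abs ht.1).trans ?_
        exact intervalIntegral.integral_mono_on ht.1 (II_sub (hX i j).1 ha ht).abs
          (II_sub hkφ ha ht) fun x _ => hbound x i j
      simp only [mul_assoc, intervalIntegral.integral_const_mul]
      calc φ t ≤ ∑ _i : ι, ∑ _j : κ, ∫ τ in a..t, (α τ + β τ) * φ τ :=
            Finset.sum_le_sum fun i _ => Finset.sum_le_sum fun j _ => h1 i j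
        _ = _ := by simp)
  intro t ht
  ext i j
  have := hent t i j
  rw [hzero t ht] at this
  exact abs_nonpos_iff.1 this

end MatrixCalculus

/-! ### Integrability of `H* R⁻¹ H` -/

section Coefficients

variable {a b : ℝ}

/-- If `R ⪰ r I` then the entries of `R⁻¹` are bounded by `1 / r`. -/
theorem inv_entry_bound {m : ℕ} {r : ℝ} (hr : 0 < r) {R : Matrix (Fin m) (Fin m) ℝ}
    (h : (R - r • (1 : Matrix (Fin m) (Fin m) ℝ)).PosSemidef) (i j : Fin m) :
    |R⁻¹ i j| ≤ 1 / r := by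
  have hq : ∀ x : Fin m → ℝ, r * (x ⬝ᵥ x) ≤ x ⬝ᵥ (R *ᵥ x) := by
    intro x
    have := h.dotProduct_mulVec_nonneg x
    simp only [star_trivial, sub_mulVec, smul_mulVec, one_mulVec, dotProduct_sub,
      dotProduct_smul, smul_eq_mul] at this
    linarith
  have hu : IsUnit R.det := by
    rw [isUnit_iff_ne_zero]
    intro hdet
    obtain ⟨x, hx0, hx⟩ := Matrix.exists_mulVec_eq_zero_iff.2 hdet
    apply hx0
    have h1 := hq x
    rw [hx, dotProduct_zero] at h1
    have h2 : 0 ≤ x ⬝ᵥ x := by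
      simpa using dotProduct_star_self_nonneg x
    have h3 : x ⬝ᵥ x = 0 := by nlinarith
    simpa using h3
  -- the `j`-th column `x` of `R⁻¹` satisfies `r |x|² ≤ x ⬝ R x = x j`
  set x : Fin m → ℝ := fun l => R⁻¹ l j with hx
  have hRx : R *ᵥ x = Pi.single j 1 := by
    have : x = R⁻¹ *ᵥ Pi.single j 1 := by
      ext l; simp [hx]
    rw [this, mulVec_mulVec, Matrix.mul_nonsing_inv _ hu, one_mulVec]
  have h1 := hq x
  rw [hRx, dotProduct_single, mul_one] at h1
  have hsq : ∀ l, x l ^ 2 ≤ x ⬝ᵥ x := by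
    intro l
    rw [dotProduct, sq]
    exact Finset.single_le_sum (f := fun l => x l * x l) (fun _ _ => mul_self_nonneg _)
      (Finset.mem_univ l)
  have hj : x j ≤ 1 / r := by
    rw [le_div_iff₀ hr]
    have := mul_le_mul_of_nonneg_left (hsq j) hr.le
    by_contra hcon
    push Not at hcon
    have hxj : 0 < x j := by nlinarith
    nlinarith
  have hi : x i ^ 2 ≤ (1 / r) ^ 2 := by
    have := mul_le_mul_of_nonneg_left (hsq i) hr.le
    have h4 : r * x i ^ 2 ≤ 1 / r := by linarith
    rw [div_pow, one_pow, le_div_iff₀ (by positivity)]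
    rw [le_div_iff₀ hr] at h4
    nlinarith
  exact abs_le_of_sq_le_sq hi (by positivity)

/-- Entrywise measurability of `t ↦ R(t)⁻¹`, from Cramer's rule. -/
theorem inv_entry_meas {m : ℕ} {μ : Measure ℝ} {R : ℝ → Matrix (Fin m) (Fin m) ℝ}
    (h : ∀ i j, AEStronglyMeasurable (fun t => R t i j) μ) (i j : Fin m) :
    AEStronglyMeasurable (fun t => (R t)⁻¹ i j) μ := by
  have hR : AEStronglyMeasurable (fun t => (fun i j => R t i j : Fin m → Fin m → ℝ)) μ :=
    (aemeasurable_pi_lambda _ fun i => aemeasurable_pi_lambda _ fun j =>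
      (h i j).aemeasurable).aestronglyMeasurable
  have hdet : Continuous fun M : Fin m → Fin m → ℝ => (Matrix.of M).det :=
    Continuous.matrix_det continuous_id
  have hadj : Continuous fun M : Fin m → Fin m → ℝ => (Matrix.of M).adjugate i j :=
    (Continuous.matrix_adjugate continuous_id).matrix_elem i j
  have h1 := (hdet.comp_aestronglyMeasurable hR).aemeasurable.inv
  have h2 := (hadj.comp_aestronglyMeasurable hR).aemeasurable
  have := (h1.mul h2).aestronglyMeasurable
  refine this.congr (Eventually.of_forall fun t => ?_)
  simp only [Matrix.inv_def, Ring.inverse_eq_inv', Matrix.smul_apply, smul_eq_mul]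
  rfl

/-- `H* R⁻¹ H` is integrable when `H` is square integrable and `R ⪰ r I`. -/
theorem matII_hrh {n m : ℕ} (hab : a ≤ b) {r : ℝ} (hr : 0 < r) {H : ℝ → Matrix (Fin m) (Fin n) ℝ}
    {R : ℝ → Matrix (Fin m) (Fin m) ℝ} (hH : MatL2 H a b) (hR : MatL2 R a b)
    (hRbd : ∀ t ∈ Icc a b, (R t - r • (1 : Matrix (Fin m) (Fin m) ℝ)).PosSemidef) :
    MatII (hrh H R) a b := by
  intro i j
  have hterm : ∀ l k, IntervalIntegrable (fun t => H t k i * (R t)⁻¹ k l * H t l j) volume a b := by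
    intro l k
    have hd : IntervalIntegrable (fun t => 1 / r * ((H t k i) ^ 2 + (H t l j) ^ 2)) volume a b :=
      ((hH k i).2.add (hH l j).2).const_mul _
    rw [intervalIntegrable_iff_integrableOn_Ioc_of_le hab] at hd ⊢
    have hm : ∀ {f : ℝ → ℝ}, IntervalIntegrable f volume a b →
        AEStronglyMeasurable f (volume.restrict (Ioc a b)) := fun hf =>
      ((intervalIntegrable_iff_integrableOn_Ioc_of_le hab).1 hf).aestronglyMeasurable
    refine Integrable.mono' hd (((hm (hH k i).1).mul
      (inv_entry_meas (fun p q => hm (hR p q).1) k l)).mul (hm (hH l j).1)) ?_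
    refine (ae_restrict_iff' measurableSet_Ioc).2 (Eventually.of_forall fun t ht => ?_)
    have hb := inv_entry_bound hr (hRbd t (Ioc_subset_Icc_self ht)) k l
    rw [Real.norm_eq_abs, abs_mul, abs_mul]
    have h1 : 0 ≤ 1 / r := by positivity
    have h2 := sq_nonneg (|H t k i| - |H t l j|)
    have h3 : |H t k i| * |H t l j| ≤ (H t k i) ^ 2 + (H t l j) ^ 2 := by
      rw [← sq_abs (H t k i), ← sq_abs (H t l j)]
      nlinarith [abs_nonneg (H t k i), abs_nonneg (H t l j)]
    calc |H t k i| * |(R t)⁻¹ k l| * |H t l j| = |(R t)⁻¹ k l| * (|H t k i| * |H t l j|) := by ring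
      _ ≤ 1 / r * ((H t k i) ^ 2 + (H t l j) ^ 2) :=
        mul_le_mul hb h3 (by positivity) h1
  have := IntervalIntegrable.sum (μ := volume) (a := a) (b := b) Finset.univ
    (f := fun l t => ∑ k, H t k i * (R t)⁻¹ k l * H t l j) (fun l _ => by
      have := IntervalIntegrable.sum (μ := volume) (a := a) (b := b) Finset.univ
        (f := fun k t => H t k i * (R t)⁻¹ k l * H t l j) (fun k _ => hterm l k)
      simpa only [Finset.sum_fn] using this)
  simpa only [Finset.sum_fn, hrh, Matrix.mul_apply, Matrix.transpose_apply, Finset.sum_mul]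
    using this

end Coefficients

/-! ### Vector functions as columns; symmetry of the coefficients -/

section Columns

variable {a b : ℝ} {ι : Type*}

/-- A vector-valued function, viewed as a one-column matrix, inherits `MatPrim` from the
vector-valued integral equation. -/
theorem matPrim_col [Fintype ι] {x x' : ℝ → ι → ℝ} {s : ℝ} {c : ι → ℝ}
    (hx' : IntervalIntegrable x' volume a b) (hs : s ∈ Icc a b)
    (h : ∀ t ∈ Icc a b, x t = c + ∫ τ in s..t, x' τ) :
    MatPrim a b (fun t => replicateCol Unit (x t)) (fun t => replicateCol Unit (x' t)) := by
  intro i _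
  have hev : ∀ t, IntervalIntegrable x' volume s t →
      (∫ τ in s..t, x' τ) i = ∫ τ in s..t, x' τ i := fun t ht =>
    ((ContinuousLinearMap.proj (R := ℝ) (φ := fun _ : ι => ℝ) i).intervalIntegral_comp_comm
      ht).symm
  refine IsPrim.of_base (c := c i) (s := s) ⟨hx'.1.eval i, hx'.2.eval i⟩ hs fun t ht => ?_
  simp only [replicateCol_apply]
  rw [h t ht, Pi.add_apply, hev t (II_sub hx' hs ht)]

end Columns

theorem gqg_transpose {n d : ℕ} (G : ℝ → Matrix (Fin n) (Fin d) ℝ)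
    (Q : ℝ → Matrix (Fin d) (Fin d) ℝ) (t : ℝ) (h : (Q t)ᵀ = Q t) :
    (gqg G Q t)ᵀ = gqg G Q t := by
  simp only [gqg, transpose_mul, transpose_transpose, h, Matrix.mul_assoc]

theorem hrh_transpose {n m : ℕ} (H : ℝ → Matrix (Fin m) (Fin n) ℝ)
    (R : ℝ → Matrix (Fin m) (Fin m) ℝ) (t : ℝ) (h : (R t)ᵀ = R t) :
    (hrh H R t)ᵀ = hrh H R t := by
  simp only [hrh, transpose_mul, transpose_transpose, transpose_nonsing_inv, h, Matrix.mul_assoc]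

/-! ### The closed forms -/

/-- Closed-form expressions for `ν̂` and `μ̂` in terms of the filter solution `r`
(case `ΣT = 0`, `lν = H*R⁻¹g`). -/
theorem stmt15 {n m d : ℕ} (t0 T r : ℝ) (ht : t0 < T) (hr : 0 < r)
    (F : ℝ → Matrix (Fin n) (Fin n) ℝ) (G : ℝ → Matrix (Fin n) (Fin d) ℝ)
    (Q : ℝ → Matrix (Fin d) (Fin d) ℝ) (H : ℝ → Matrix (Fin m) (Fin n) ℝ)
    (R : ℝ → Matrix (Fin m) (Fin m) ℝ)
    (hF : MatII F t0 T) (hG : MatL2 G t0 T) (hQ : MatII Q t0 T)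
    (hQpsd : ∀ t ∈ Icc t0 T, (Q t).PosSemidef) (hH : MatL2 H t0 T) (hR : MatL2 R t0 T)
    (hRbd : ∀ t ∈ Icc t0 T, (R t - r • (1 : Matrix (Fin m) (Fin m) ℝ)).PosSemidef)
    (P0 : Matrix (Fin n) (Fin n) ℝ) (hP0 : P0.PosSemidef)
    (Pm : ℝ → Matrix (Fin n) (Fin n) ℝ) (hPm : SolvesFwdRiccati t0 T F G Q H R P0 Pm)
    (PhiFP : ℝ → ℝ → Matrix (Fin n) (Fin n) ℝ)
    (hPhiFP : IsTransition t0 T (fun τ => F τ - Pm τ * hrh H R τ) PhiFP)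
    (g : ℝ → Fin m → ℝ) (hg : VecL2 g t0 T)
    (μ ν : ℝ → Fin n → ℝ)
    (hμν : SolvesTPBVP t0 T F G Q H R P0 0 (fun _ => 0)
      (fun τ => ((H τ)ᵀ * (R τ)⁻¹).mulVec (g τ)) μ ν)
    (rr : ℝ → Fin n → ℝ) (hrr : SolvesRODE t0 T F H R Pm g rr) :
    ∀ s ∈ Icc t0 T,
      ν s = -∫ t in s..T, ((PhiFP t s)ᵀ * (H t)ᵀ * (R t)⁻¹).mulVec (g t - (H t).mulVec (rr t)) ∧
      μ s = rr s + (Pm s).mulVec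
        (∫ t in s..T, ((PhiFP t s)ᵀ * (H t)ᵀ * (R t)⁻¹).mulVec (g t - (H t).mulVec (rr t))) := by
  have hab := ht.le
  have ha : t0 ∈ Icc t0 T := left_mem_Icc.2 hab
  have hb : T ∈ Icc t0 T := right_mem_Icc.2 hab
  have hRs : ∀ t ∈ Icc t0 T, (R t)ᵀ = R t := by
    intro t htt
    have h := (hRbd t htt).isHermitian
    rw [Matrix.IsHermitian, conjTranspose_eq_transpose_of_trivial, transpose_sub, transpose_smul,
      transpose_one] at h
    exact sub_left_injective h
  have hMs : ∀ t ∈ Icc t0 T, (hrh H R t)ᵀ = hrh H R t := fun t htt =>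
    hrh_transpose H R t (hRs t htt)
  have hWs : ∀ t ∈ Icc t0 T, (gqg G Q t)ᵀ = gqg G Q t := fun t htt =>
    gqg_transpose G Q t (by
    have h := (hQpsd t htt).isHermitian
    rwa [Matrix.IsHermitian, conjTranspose_eq_transpose_of_trivial] at h)
  have hM : MatII (hrh H R) t0 T := matII_hrh hab hr hH hR hRbd
  obtain ⟨hPc, hPI, hPa, hPeq⟩ := hPm
  have hP : MatPrim t0 T Pm _ := fun i j => IsPrim.of_base (c := P0 i j) (hPI i j) ha fun t htt => by
    rw [hPeq t htt]; rfl
  have hMP : MatII (fun t => hrh H R t * Pm t) t0 T := matII_mul_cont hab hM hPc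
  -- `Π - Πᵀ` solves a homogeneous linear equation with zero initial value
  have hPs : ∀ t ∈ Icc t0 T, (Pm t)ᵀ = Pm t := by
    have hD := hP.sub hP.transpose
    have hMPt : MatII (fun t => (hrh H R t * Pm t)ᵀ) t0 T := hMP.transpose
    have hz := MatPrim.eq_zero hab (A := fun t => F t - (hrh H R t * Pm t)ᵀ)
      (B := fun t => (F t)ᵀ - hrh H R t * Pm t) (hF.sub hMPt) (hF.transpose.sub hMP)
      (hD.congr hab fun t htt => by
        simp only [transpose_add, transpose_sub, transpose_mul, transpose_transpose, hMs t htt,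
          hWs t htt]
        noncomm_ring)
      (by
        have h := hP0.isHermitian
        rw [Matrix.IsHermitian, conjTranspose_eq_transpose_of_trivial] at h
        rw [hPa, h, sub_self])
    intro t htt
    exact (sub_eq_zero.1 (hz t htt)).symm
  have hPM : MatII (fun t => Pm t * hrh H R t) t0 T := by
    intro i j
    refine (hMP.transpose i j).congr fun t htt => ?_
    rw [uIoc_of_le hab] at htt
    have htt := Ioc_subset_Icc_self htt
    simp only [transpose_mul, hMs t htt, hPs t htt]
  obtain ⟨hμc, hνc, hμI, hνI, hμeq, hνeq, hμa, hνb⟩ := hμν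
  obtain ⟨hrc, hrI, hra, hreq⟩ := hrr
  have hU := matPrim_col hμI ha hμeq
  have hN := matPrim_col (x := ν) (c := ν T) hνI.neg hb (fun t htt => by
    rw [hνeq t htt, intervalIntegral.integral_symm, ← intervalIntegral.integral_neg]
    rfl)
  have hr' := matPrim_col (x := rr) (c := 0) hrI ha (fun t htt => by rw [hreq t htt, zero_add])
  -- the defect `μ + Π ν - r` solves `e' = (F - Π M) e`, `e(t0) = 0`
  have hUeq : ∀ t ∈ Icc t0 T, μ t = rr t - Pm t *ᵥ ν t := by
    have hcol_sub : ∀ x y : Fin n → ℝ,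
        replicateCol Unit (x - y) = replicateCol Unit x - replicateCol Unit y := fun _ _ => rfl
    have hE := (hU.add (hP.mul hab hN)).sub hr'
    have hz := MatPrim.eq_zero hab (A := fun t => F t - Pm t * hrh H R t)
      (B := fun _ => (0 : Matrix Unit Unit ℝ)) (hF.sub hPM) (fun i j => by simp)
      (hE.congr hab fun t htt => by
        simp only [Matrix.mul_zero, add_zero, ← replicateCol_mulVec, ← replicateCol_add, ← hcol_sub]
        congr 1
        simp only [Pi.neg_apply, mulVec_add, mulVec_sub, mulVec_neg, add_mulVec, sub_mulVec,
          mulVec_mulVec, Matrix.sub_mul, Matrix.mul_assoc]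
        abel)
      (by
        rw [hPa, hra, hμa]
        ext i u
        simp [mulVec, dotProduct, Matrix.mul_apply])
    intro t htt
    have h := hz t htt
    rw [← replicateCol_mulVec, ← replicateCol_add] at h
    have h' : μ t + Pm t *ᵥ ν t = rr t := replicateCol_injective (sub_eq_zero.1 h)
    rw [← h', add_sub_cancel_right]
  -- `ν(s)` from integrating the derivative of `t ↦ Φ(t,s)ᵀ ν(t)` over `[s,T]`
  have main : ∀ s ∈ Icc t0 T, ν s =
      -∫ t in s..T, ((PhiFP t s)ᵀ * (H t)ᵀ * (R t)⁻¹).mulVec (g t - (H t).mulVec (rr t)) := by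
    intro s hs
    obtain ⟨-, hΦI, hΦeq⟩ := hPhiFP s hs
    have hΦ : MatPrim t0 T (fun t => PhiFP t s) _ := fun i j =>
      IsPrim.of_base (c := (1 : Matrix (Fin n) (Fin n) ℝ) i j) (hΦI i j) hs fun t htt => by
        beta_reduce
        rw [hΦeq t htt]; rfl
    have hss : PhiFP s s = 1 := by
      rw [hΦeq s hs]
      ext i j
      simp [matInt]
    have hZ := (hΦ.transpose.mul hab hN).congr hab (Y' := fun t => replicateCol Unit
        (((PhiFP t s)ᵀ * (H t)ᵀ * (R t)⁻¹).mulVec (g t - (H t).mulVec (rr t)))) fun t htt => by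
      rw [← replicateCol_mulVec, ← replicateCol_mulVec, ← replicateCol_add]
      congr 1
      rw [Pi.neg_apply, hUeq t htt]
      simp only [transpose_mul, transpose_sub, hMs t htt, hPs t htt]
      simp only [hrh, mulVec_sub, mulVec_mulVec, sub_mulVec, Matrix.mul_sub, mulVec_add,
        neg_sub, Matrix.mul_assoc]
      abel
    ext i
    have hi := (hZ i ()).integral_eq hs hb
    have hint : IntervalIntegrable (fun t =>
        ((PhiFP t s)ᵀ * (H t)ᵀ * (R t)⁻¹).mulVec (g t - (H t).mulVec (rr t))) volume s T :=
      ⟨Integrable.of_eval fun i => (II_sub (hZ i ()).1 hs hb).1,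
        Integrable.of_eval fun i => (II_sub (hZ i ()).1 hs hb).2⟩
    have hev := (ContinuousLinearMap.proj (R := ℝ) (φ := fun _ : Fin n => ℝ)
      i).intervalIntegral_comp_comm hint
    simp only [← replicateCol_mulVec, replicateCol_apply, hss, transpose_one, one_mulVec, hνb,
      zero_mulVec, mulVec_zero, Pi.zero_apply, zero_sub] at hi
    rw [Pi.neg_apply]
    have hi' := hev.symm.trans hi
    simp only [ContinuousLinearMap.proj_apply] at hi'
    rw [hi', neg_neg]
  intro s hs
  refine ⟨main s hs, ?_⟩
  rw [hUeq s hs, main s hs, mulVec_neg, sub_neg_eq_add]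

end SDEKernels
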